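/- For every n ∈ ℕ, the map Φ̃ sending the ~-class of a recurrent chip configuration c to the ~_s-class of the stabilization (ĉ)° of its restriction ĉ is well defined ((ĉ)° is s-recurrent, and the resulting class does not depend on the chosen representative of the ~-class) and restricts to a bijection from Rec_n(G,~) onto the set {[d̂] ∈ Rec(G,s)/~_s : slvl([d̂]) ≤ n}. -/

import Mathlib

open Finset Polynomial

namespace SandpileBM

variable {V E : Type} [Fintype V] [DecidableEq V] [Fintype E] [DecidableEq E]

/-- The number of edges from `v` to `w` in the multigraph given by `src`, `tgt`. -/
def numEdges (src tgt : E → V) (v w : V) : ℕ :=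
  (Finset.univ.filter fun e => src e = v ∧ tgt e = w).card

/-- The out-degree of a vertex. -/
def outdeg (src : E → V) (v : V) : ℕ :=
  (Finset.univ.filter fun e => src e = v).card

/-- The in-degree of a vertex. -/
def indeg (tgt : E → V) (v : V) : ℕ :=
  (Finset.univ.filter fun e => tgt e = v).card

/-- The digraph is strongly connected: any vertex is reachable from any other by
a directed path. -/
def StronglyConnected (src tgt : E → V) : Prop :=
  ∀ v w : V, Relation.ReflTransGen (fun a b => ∃ e : E, src e = a ∧ tgt e = b) v w

/-- Result of firing the vertex `v` on the chip configuration `c` (sinkless model). -/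
def fire (src tgt : E → V) (c : V → ℕ) (v : V) : V → ℕ :=
  fun w => c w + numEdges src tgt v w - (if w = v then outdeg src v else 0)

/-- One legal firing move in the sinkless model. -/
def FireStep (src tgt : E → V) (c d : V → ℕ) : Prop :=
  ∃ v : V, outdeg src v ≤ c v ∧ d = fire src tgt c v

/-- `Reach c d`: `d` is obtained from `c` by a finite sequence of legal firing moves. -/
def Reach (src tgt : E → V) : (V → ℕ) → (V → ℕ) → Prop :=
  Relation.ReflTransGen (FireStep src tgt)

/-- Stability of a chip configuration. -/
def Stable (src : E → V) (c : V → ℕ) : Prop :=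
  ∀ v : V, c v < outdeg src v

/-- A chip configuration is recurrent if it is not stable and every configuration
accessible from it can reach it back. -/
def Recurrent (src tgt : E → V) (c : V → ℕ) : Prop :=
  ¬ Stable src c ∧ ∀ d : V → ℕ, Reach src tgt c d → Reach src tgt d c

/-- Level (total number of chips) of a chip configuration. -/
def lvl (c : V → ℕ) : ℕ := ∑ v : V, c v

/-- Indicator function of the vertex `s`. -/
def deltaS (s : V) : V → ℕ := fun v => if v = s then 1 else 0

/-- Result of firing the vertex `v` on an `s`-configuration. -/
def sfire (src tgt : E → V) (s : V) (c : {v : V // v ≠ s} → ℕ) (v : {v : V // v ≠ s}) :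
    {v : V // v ≠ s} → ℕ :=
  fun w => c w + numEdges src tgt v.1 w.1 - (if w = v then outdeg src v.1 else 0)

/-- One legal s-firing move. -/
def SFireStep (src tgt : E → V) (s : V) (c d : {v : V // v ≠ s} → ℕ) : Prop :=
  ∃ v : {v : V // v ≠ s}, outdeg src v.1 ≤ c v ∧ d = sfire src tgt s c v

/-- `SReach c d`: `d` is obtained from `c` by a finite sequence of legal s-firing moves. -/
def SReach (src tgt : E → V) (s : V) :
    ({v : V // v ≠ s} → ℕ) → ({v : V // v ≠ s} → ℕ) → Prop :=
  Relation.ReflTransGen (SFireStep src tgt s)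

/-- Stability of an `s`-configuration. -/
def SStable (src : E → V) (s : V) (c : {v : V // v ≠ s} → ℕ) : Prop :=
  ∀ v : {v : V // v ≠ s}, c v < outdeg src v.1

/-- The stabilization `c°` of an `s`-configuration: the (for strongly connected digraphs,
unique) stable `s`-configuration reachable from `c` by legal s-firing moves. -/
noncomputable def stab (src tgt : E → V) (s : V) (c : {v : V // v ≠ s} → ℕ) :
    {v : V // v ≠ s} → ℕ :=
  Classical.epsilon fun d => SReach src tgt s c d ∧ SStable src s d

/-- An `s`-configuration `c` is s-recurrent if every `s`-configuration can be completed
to one whose stabilization is `c`. -/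
def SRecurrent (src tgt : E → V) (s : V) (c : {v : V // v ≠ s} → ℕ) : Prop :=
  ∀ c₁ : {v : V // v ≠ s} → ℕ, ∃ c₂ : {v : V // v ≠ s} → ℕ,
    stab src tgt s (c₁ + c₂) = c

/-- `β_s`, recording the number of edges from `s` to each other vertex. -/
def betaS (src tgt : E → V) (s : V) : {v : V // v ≠ s} → ℕ :=
  fun v => numEdges src tgt s v.1

/-- The relation `~_s` on s-recurrent configurations: `d = (c + k·β_s)°` for some `k`. -/
def SEquiv (src tgt : E → V) (s : V) (c d : {v : V // v ≠ s} → ℕ) : Prop :=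
  ∃ k : ℕ, stab src tgt s (c + k • betaS src tgt s) = d

/-- Restriction of a chip configuration to `V ∖ {s}`. -/
def restrictS (s : V) (c : V → ℕ) : {v : V // v ≠ s} → ℕ := fun v => c v.1

/-- Extension `c̄` of an `s`-configuration by `0` at `s`. -/
def extendS (s : V) (c : {v : V // v ≠ s} → ℕ) : V → ℕ :=
  fun v => if h : v = s then 0 else c ⟨v, h⟩

/-- The s-index `χ(c)`: the least `k` such that `c̄ + k·δ_s` is recurrent. -/
noncomputable def sIndex (src tgt : E → V) (s : V) (c : {v : V // v ≠ s} → ℕ) : ℕ :=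
  sInf {k : ℕ | Recurrent src tgt (extendS s c + k • deltaS s)}

/-- `φ(c) := c̄ + χ(c)·δ_s`. -/
noncomputable def phi (src tgt : E → V) (s : V) (c : {v : V // v ≠ s} → ℕ) : V → ℕ :=
  extendS s c + sIndex src tgt s c • deltaS s

/-- The s-level `slvl(c) := χ(c) + Σ_{v ≠ s} c(v)`. -/
noncomputable def slvl (src tgt : E → V) (s : V) (c : {v : V // v ≠ s} → ℕ) : ℕ :=
  sIndex src tgt s c + ∑ v : {v : V // v ≠ s}, c v

/-- The d-level `dlvl(c) := deg⁺(s) + Σ_{v ≠ s} c(v)`. -/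
def dlvl (src : E → V) (s : V) (c : {v : V // v ≠ s} → ℕ) : ℕ :=
  outdeg src s + ∑ v : {v : V // v ≠ s}, c v

/-- The set (as a type) of recurrent chip configurations. -/
abbrev RecL (src tgt : E → V) := {c : V → ℕ // Recurrent src tgt c}

/-- The setoid on recurrent configurations generated by the relation `~` (i.e. `⤳`). -/
def recLSetoid (src tgt : E → V) : Setoid (RecL src tgt) :=
  Relation.EqvGen.setoid fun a b => Reach src tgt a.1 b.1

/-- The set of `~`-classes of recurrent configurations. -/
abbrev RecLQuot (src tgt : E → V) := Quotient (recLSetoid src tgt)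

/-- The set (as a type) of s-recurrent configurations. -/
abbrev RecS (src tgt : E → V) (s : V) := {c : {v : V // v ≠ s} → ℕ // SRecurrent src tgt s c}

/-- The setoid on s-recurrent configurations generated by the relation `~_s`. -/
def recSSetoid (src tgt : E → V) (s : V) : Setoid (RecS src tgt s) :=
  Relation.EqvGen.setoid fun a b => SEquiv src tgt s a.1 b.1

/-- The set of `~_s`-classes of s-recurrent configurations. -/
abbrev RecSQuot (src tgt : E → V) (s : V) := Quotient (recSSetoid src tgt s)

/-- The level of a `~`-class of recurrent configurations (level is constant on classes). -/
noncomputable def lvlClass (src tgt : E → V) (q : RecLQuot src tgt) : ℕ :=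
  sSup ((fun c : RecL src tgt => lvl c.1) '' {c | Quotient.mk (recLSetoid src tgt) c = q})

/-- The s-level of a `~_s`-class (s-level is constant on classes). -/
noncomputable def slvlClass (src tgt : E → V) (s : V) (q : RecSQuot src tgt s) : ℕ :=
  sSup ((fun c : RecS src tgt s => slvl src tgt s c.1) ''
    {c | Quotient.mk (recSSetoid src tgt s) c = q})

/-- The d-level of a `~_s`-class: the maximum d-level over the class. -/
noncomputable def dlvlClass (src tgt : E → V) (s : V) (q : RecSQuot src tgt s) : ℕ :=
  sSup ((fun c : RecS src tgt s => dlvl src s c.1) ''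
    {c | Quotient.mk (recSSetoid src tgt s) c = q})

/-- The Biggs–Merino polynomial `B(G,s;y) = Σ_{[c] ∈ Rec(G,s)/~_s} y^{dlvl([c])}`. -/
noncomputable def BM (src tgt : E → V) (s : V) : Polynomial ℤ :=
  ∑ᶠ q : RecSQuot src tgt s, X ^ dlvlClass src tgt s q

/-- `LegalSeq l c d`: firing the vertices in the list `l` in order is a sequence of
legal firing moves transforming `c` into `d` (sinkless model). -/
def LegalSeq (src tgt : E → V) : List V → (V → ℕ) → (V → ℕ) → Prop
  | [], c, d => d = c
  | v :: l, c, d => outdeg src v ≤ c v ∧ LegalSeq src tgt l (fire src tgt c v) d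

/-- `SLegalSeq l c d`: firing the vertices in the list `l` in order is a sequence of
legal s-firing moves transforming `c` into `d`. -/
def SLegalSeq (src tgt : E → V) (s : V) :
    List {v : V // v ≠ s} → ({v : V // v ≠ s} → ℕ) → ({v : V // v ≠ s} → ℕ) → Prop
  | [], c, d => d = c
  | v :: l, c, d => outdeg src v.1 ≤ c v ∧ SLegalSeq src tgt s l (sfire src tgt s c v) d

/-- The configuration obtained from `c` after firing the vertices of `l` in order. -/
def iterFire (src tgt : E → V) (c : V → ℕ) (l : List V) : V → ℕ :=
  l.foldl (fire src tgt) c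

/-- The Laplacian of the digraph applied to an integer vector:
`(Δq)(v) = deg⁺(v)·q(v) − Σ_w A(w,v)·q(w)`. -/
def lapApply (src tgt : E → V) (q : V → ℤ) : V → ℤ :=
  fun v => (outdeg src v : ℤ) * q v - ∑ w : V, (numEdges src tgt w v : ℤ) * q w

/-- `r` is the primitive period vector of the digraph: it has positive entries with
gcd `1`, lies in the kernel of the Laplacian, and generates this kernel. -/
def IsPeriodVector (src tgt : E → V) (r : V → ℕ) : Prop :=
  (∀ v : V, 0 < r v) ∧ Finset.univ.gcd r = 1 ∧
    lapApply src tgt (fun v => (r v : ℤ)) = 0 ∧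
    ∀ q : V → ℤ, lapApply src tgt q = 0 → ∃ k : ℤ, q = k • fun v => (r v : ℤ)

/-- The Laplacian matrix of the digraph. -/
def lapMatrix (src tgt : E → V) : Matrix V V ℤ :=
  Matrix.of fun v w =>
    if v = w then (outdeg src v : ℤ) - numEdges src tgt v v
    else -(numEdges src tgt w v : ℤ)

/-- The determinant of the reduced Laplacian obtained by deleting the row and
column indexed by `v`. -/
def reducedLapDet (src tgt : E → V) (v : V) : ℤ :=
  (((lapMatrix src tgt).submatrix (fun a : {w : V // w ≠ v} => a.1)
    (fun a : {w : V // w ≠ v} => a.1)).det)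

/-- The period constant `α := gcd_{v ∈ V} det Δ_v`. -/
def periodConstant (src tgt : E → V) : ℤ :=
  Finset.univ.gcd (reducedLapDet src tgt)

/-- `IsWalk l a b`: the list of edges `l` forms a directed walk from `a` to `b`. -/
def IsWalk (src tgt : E → V) : List E → V → V → Prop
  | [], a, b => a = b
  | e :: l, a, b => src e = a ∧ IsWalk src tgt l (tgt e) b

/-- `IsPath l a b`: the list of edges `l` forms a directed path from `a` to `b`:
all visited vertices are distinct (except that the final vertex is allowed to
coincide with the starting vertex). -/
def IsPath (src tgt : E → V) (l : List E) (a b : V) : Prop :=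
  IsWalk src tgt l a b ∧ (l.map tgt).Nodup ∧ a ∉ (l.map tgt).dropLast

/-- `T` is an arborescence rooted at `s`: for every vertex `v` there is a unique
directed path from `s` to `v` using only edges of `T`. -/
def IsArborescence (src tgt : E → V) (s : V) (T : Finset E) : Prop :=
  ∀ v : V, ∃! l : List E, (∀ e ∈ l, e ∈ T) ∧ IsPath src tgt l s v

/-- The edge `e ∉ T` is externally active for the arborescence `T` (w.r.t. the linear
order on `E`): where `P₁`, `P₂` are the two edge-disjoint directed paths in `T ∪ {e}`
sharing their starting vertex and ending at `tgt e`, with `e ∈ P₁`, the smallest edge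
on `P₁ ++ P₂` lies on `P₁`. -/
def ExtActive [LinearOrder E] (src tgt : E → V) (T : Finset E) (e : E) : Prop :=
  e ∉ T ∧ ∃ (u : V) (p₁ p₂ : List E),
    (∀ f ∈ p₁, f ∈ T ∨ f = e) ∧ (∀ f ∈ p₂, f ∈ T ∨ f = e) ∧
    IsPath src tgt p₁ u (tgt e) ∧ IsPath src tgt p₂ u (tgt e) ∧
    e ∈ p₁ ∧ (∀ f ∈ p₁, f ∉ p₂) ∧
    ∃ fmin ∈ p₁, ∀ f ∈ p₁ ++ p₂, fmin ≤ f

/-- The external activity `e(T)` of an arborescence `T`. -/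
noncomputable def extActivity [LinearOrder E] (src tgt : E → V) (T : Finset E) : ℕ :=
  Nat.card {e : E // ExtActive src tgt T e}

/-- The greedoid Tutte polynomial `T(G,s;y) = Σ_{T ∈ A(G,s)} y^{e(T)}`. -/
noncomputable def greedoidTutte [LinearOrder E] (src tgt : E → V) (s : V) : Polynomial ℤ :=
  ∑ᶠ T : {T : Finset E // IsArborescence src tgt s T}, X ^ extActivity src tgt T.1

/-- `f` is a `G^r`-parking function rooted at `s`. -/
def IsParking (src tgt : E → V) (s : V) (f : {v : V // v ≠ s} → ℕ) : Prop :=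
  ∀ A : Finset {v : V // v ≠ s}, A.Nonempty →
    ∃ v ∈ A, f v < Nat.card {e : E // (∀ w ∈ A, src e ≠ w.1) ∧ tgt e = v.1}

/-- The d-level of a `G^r`-parking function: `|E| − |V| + 1 − Σ_{v≠s} f(v)`. -/
noncomputable def parkDlvl (src : E → V) (s : V) (f : {v : V // v ≠ s} → ℕ) : ℕ :=
  ((Fintype.card E : ℤ) - Fintype.card V + 1 - ∑ v : {v : V // v ≠ s}, (f v : ℤ)).toNat

/-- `σ` is an s-decreasing traversal: a sequence in which every vertex and edge of `G`
appears exactly once, satisfying (R1) every vertex other than `s` is immediately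
preceded by an edge targeting it, and (R2) every edge is the `<ₑ`-maximum edge not yet
seen whose source has been seen. -/
def IsTraversal [LinearOrder E] (src tgt : E → V) (s : V) (σ : List (V ⊕ E)) : Prop :=
  σ.Nodup ∧ (∀ x : V ⊕ E, x ∈ σ) ∧
  (∀ (i : ℕ) (hi : i < σ.length) (v : V),
      σ.get ⟨i, hi⟩ = Sum.inl v → v ≠ s →
      0 < i ∧ ∃ e : E, tgt e = v ∧ σ.get ⟨i - 1, by omega⟩ = Sum.inr e) ∧
  (∀ (i : ℕ) (hi : i < σ.length) (e : E),
      σ.get ⟨i, hi⟩ = Sum.inr e →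
      Sum.inl (src e) ∈ σ.take i ∧
      ∀ f : E, Sum.inr f ∉ σ.take i → Sum.inl (src f) ∈ σ.take i → f ≤ e)

open scoped Classical in
/-- `Υ(σ)`: the set of edges immediately preceding a non-sink vertex in `σ`. -/
noncomputable def Upsilon (src tgt : E → V) (s : V) (σ : List (V ⊕ E)) : Finset E :=
  Finset.univ.filter fun e =>
    ∃ (i : ℕ) (hi : i < σ.length) (v : V), v ≠ s ∧ σ.get ⟨i, hi⟩ = Sum.inl v ∧
      0 < i ∧ ∃ hj : i - 1 < σ.length, σ.get ⟨i - 1, hj⟩ = Sum.inr e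

/-- The strength of `σ`: the number of strong edges, i.e. edges whose target appears
before them in `σ`. -/
noncomputable def strength (tgt : E → V) (σ : List (V ⊕ E)) : ℕ :=
  Nat.card {e : E // ∃ (i : ℕ) (hi : i < σ.length),
    σ.get ⟨i, hi⟩ = Sum.inr e ∧ Sum.inl (tgt e) ∈ σ.take i}

/-- `Ψ(σ)(v)`: one less than the number of edges targeting `v` that appear before the
vertex `v` in `σ`. -/
def Psi (tgt : E → V) (s : V) (σ : List (V ⊕ E)) : {v : V // v ≠ s} → ℕ :=
  fun v =>
    (((σ.takeWhile fun x => x ≠ Sum.inl v.1).filterMap Sum.getRight?).filter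
      fun e => tgt e = v.1).length - 1

section Aux

variable {src tgt : E → V} {s : V}

/-- Legal firing sequence with firing counts. -/
inductive CReach (src tgt : E → V) (c : V → ℕ) : (V → ℕ) → (V → ℕ) → Prop
  | refl : CReach src tgt c 0 c
  | step {q d : V → ℕ} (v : V) : CReach src tgt c q d → outdeg src v ≤ d v →
      CReach src tgt c (q + Pi.single v 1) (fire src tgt d v)

lemma fire_add (c : V → ℕ) (v : V) (h : outdeg src v ≤ c v) (w : V) :
    fire src tgt c v w + (if w = v then outdeg src v else 0) = c w + numEdges src tgt v w := by
  unfold fire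
  split_ifs with hw
  · subst hw; omega
  · omega

lemma sum_numEdges (src tgt : E → V) (v : V) : ∑ w, numEdges src tgt v w = outdeg src v := by
  unfold numEdges outdeg
  rw [Finset.card_eq_sum_card_fiberwise (f := tgt) (t := Finset.univ) (by simp)]
  simp only [Finset.filter_filter]

lemma lvl_fire (c : V → ℕ) (v : V) (h : outdeg src v ≤ c v) :
    lvl (fire src tgt c v) = lvl c := by
  have h1 := Finset.sum_congr (rfl : (Finset.univ : Finset V) = Finset.univ)
    (fun w _ => fire_add (tgt := tgt) c v h w)
  rw [Finset.sum_add_distrib, Finset.sum_add_distrib, sum_numEdges] at h1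
  simp only [Finset.sum_ite_eq', Finset.mem_univ, if_true] at h1
  unfold lvl
  omega

lemma CReach.trans {c d e p q : V → ℕ} (h1 : CReach src tgt c p d) (h2 : CReach src tgt d q e) :
    CReach src tgt c (p + q) e := by
  induction h2 with
  | refl => simpa using h1
  | step v _ hv ih => rw [← add_assoc]; exact CReach.step v ih hv

lemma CReach.reach {c d p : V → ℕ} (h : CReach src tgt c p d) : Reach src tgt c d := by
  induction h with
  | refl => exact Relation.ReflTransGen.refl
  | step v _ hv ih => exact Relation.ReflTransGen.tail ih ⟨v, hv, rfl⟩

lemma Reach.creach {c d : V → ℕ} (h : Reach src tgt c d) : ∃ p, CReach src tgt c p d := by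
  induction h with
  | refl => exact ⟨0, CReach.refl⟩
  | tail _ hs ih =>
    obtain ⟨p, hp⟩ := ih
    obtain ⟨v, hv, rfl⟩ := hs
    exact ⟨_, CReach.step v hp hv⟩

lemma CReach.lvl_eq {c d p : V → ℕ} (h : CReach src tgt c p d) : lvl d = lvl c := by
  induction h with
  | refl => rfl
  | step v _ hv ih => rw [lvl_fire _ _ hv, ih]

lemma Reach.lvl_eq {c d : V → ℕ} (h : Reach src tgt c d) : lvl d = lvl c := by
  obtain ⟨p, hp⟩ := Reach.creach h
  exact hp.lvl_eq

lemma CReach.lap {c d q : V → ℕ} (h : CReach src tgt c q d) (w : V) :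
    d w + q w * outdeg src w = c w + ∑ v, q v * numEdges src tgt v w := by
  induction h with
  | refl => simp
  | @step q d v _ hv ih =>
    have h1 := fire_add (tgt := tgt) d v hv w
    simp only [Pi.add_apply, add_mul, Finset.sum_add_distrib]
    have h2 : ∑ x, (Pi.single v 1 : V → ℕ) x * numEdges src tgt x w = numEdges src tgt v w := by
      simp [Pi.single_apply]
    rw [h2]
    have h3 : (Pi.single v 1 : V → ℕ) w * outdeg src w = if w = v then outdeg src v else 0 := by
      by_cases hw : w = v
      · subst hw; simp
      · simp [Pi.single_apply, hw]
    rw [h3]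
    omega

lemma CReach.pos (hG : StronglyConnected src tgt) {c q : V → ℕ} (h : CReach src tgt c q c)
    (hq : q ≠ 0) (w : V) : 0 < q w := by
  obtain ⟨v, hv⟩ : ∃ v, q v ≠ 0 := by
    by_contra hh
    push Not at hh
    exact hq (funext hh)
  have hp := hG v w
  induction hp with
  | refl => omega
  | @tail a b _ he ih =>
    obtain ⟨e, rfl, rfl⟩ := he
    have h1 := h.lap (tgt e)
    have h2 : 0 < numEdges src tgt (src e) (tgt e) :=
      Finset.card_pos.2 ⟨e, by simp⟩
    have h3 : q (src e) * numEdges src tgt (src e) (tgt e)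
        ≤ ∑ v, q v * numEdges src tgt v (tgt e) :=
      Finset.single_le_sum (f := fun v => q v * numEdges src tgt v (tgt e))
        (fun _ _ => Nat.zero_le _) (Finset.mem_univ _)
    have h4 := Nat.mul_pos ih h2
    by_contra h5
    have h6 : q (tgt e) = 0 := by omega
    rw [h6] at h1
    omega

lemma fire_comm (c : V → ℕ) (v w : V) (hvw : v ≠ w) (hv : outdeg src v ≤ c v)
    (hw : outdeg src w ≤ c w) :
    outdeg src w ≤ fire src tgt c v w ∧
      fire src tgt (fire src tgt c v) w = fire src tgt (fire src tgt c w) v := by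
  have e1 : ∀ a b, outdeg src a ≤ c a → outdeg src b ≤ c b → a ≠ b →
      outdeg src b ≤ fire src tgt c a b := by
    intro a b ha hb hab
    have := fire_add (tgt := tgt) c a ha b
    simp only [hab.symm, if_false] at this
    omega
  have hw' := e1 v w hv hw hvw
  have hv' := e1 w v hw hv hvw.symm
  refine ⟨hw', funext fun x => ?_⟩
  have h1 := fire_add (tgt := tgt) c v hv x
  have h2 := fire_add (tgt := tgt) c w hw x
  have h3 := fire_add (tgt := tgt) _ w hw' x
  have h4 := fire_add (tgt := tgt) _ v hv' x
  omega

lemma CReach.strip {c d q : V → ℕ} (h : CReach src tgt c q d) (v : V) (hv : outdeg src v ≤ c v) :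
    (q v = 0 ∧ outdeg src v ≤ d v ∧ Reach src tgt (fire src tgt c v) (fire src tgt d v)) ∨
      (0 < q v ∧ Reach src tgt (fire src tgt c v) d) := by
  induction h with
  | refl => exact Or.inl ⟨rfl, hv, Relation.ReflTransGen.refl⟩
  | @step q d w _ hw ih =>
    rcases ih with ⟨h1, h2, h3⟩ | ⟨h1, h2⟩
    · by_cases hvw : v = w
      · subst hvw
        right
        exact ⟨by simp, h3⟩
      · left
        have hc := fire_comm (tgt := tgt) d v w hvw h2 hw
        have hc' := fire_comm (tgt := tgt) d w v (Ne.symm hvw) hw h2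
        refine ⟨by simp [h1, hvw], hc'.1, ?_⟩
        rw [hc'.2]
        exact Relation.ReflTransGen.tail h3 ⟨w, hc.1, rfl⟩
    · right
      refine ⟨by simp only [Pi.add_apply]; omega, Relation.ReflTransGen.tail h2 ⟨w, hw, rfl⟩⟩

def HasLoop (src tgt : E → V) (c : V → ℕ) : Prop := ∃ q, q ≠ 0 ∧ CReach src tgt c q c

lemma add_single_ne (q : V → ℕ) (v : V) : q + Pi.single v 1 ≠ 0 := by
  intro h
  have := congrFun h v
  simp at this

lemma HasLoop.step (hG : StronglyConnected src tgt) {c : V → ℕ} (h : HasLoop src tgt c) (v : V)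
    (hv : outdeg src v ≤ c v) :
    HasLoop src tgt (fire src tgt c v) ∧ Reach src tgt (fire src tgt c v) c := by
  obtain ⟨q, hq, hl⟩ := h
  have hp := hl.pos hG hq v
  rcases hl.strip v hv with ⟨h1, _⟩ | ⟨_, h2⟩
  · omega
  · obtain ⟨p, hp⟩ := Reach.creach h2
    exact ⟨⟨_, add_single_ne p v, CReach.step v hp hv⟩, h2⟩

lemma HasLoop.reach (hG : StronglyConnected src tgt) {c d : V → ℕ} (h : HasLoop src tgt c)
    (hr : Reach src tgt c d) : HasLoop src tgt d ∧ Reach src tgt d c := by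
  induction hr with
  | refl => exact ⟨h, Relation.ReflTransGen.refl⟩
  | tail _ hs ih =>
    obtain ⟨v, hv, rfl⟩ := hs
    have := ih.1.step hG v hv
    exact ⟨this.1, this.2.trans ih.2⟩

lemma recurrent_iff (hG : StronglyConnected src tgt) (c : V → ℕ) :
    Recurrent src tgt c ↔ HasLoop src tgt c := by
  constructor
  · rintro ⟨h1, h2⟩
    unfold Stable at h1
    push Not at h1
    obtain ⟨v, hv⟩ := h1
    obtain ⟨p, hp⟩ := Reach.creach (h2 _ (Relation.ReflTransGen.single ⟨v, hv, rfl⟩))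
    have h3 : CReach src tgt c (0 + Pi.single v 1) (fire src tgt c v) := CReach.step v CReach.refl hv
    refine ⟨_, ?_, h3.trans hp⟩
    intro h
    have := congrFun h v
    simp at this
  · intro h
    refine ⟨?_, fun d hd => (h.reach hG hd).2⟩
    intro hs
    obtain ⟨q, hq, hl⟩ := h
    have key : ∀ p d, CReach src tgt c p d → p = 0 ∧ d = c := by
      intro p d hpd
      induction hpd with
      | refl => exact ⟨rfl, rfl⟩
      | step v _ hv ih =>
        rw [ih.2] at hv
        exact absurd (hs v) (by omega)
    exact hq (key _ _ hl).1

lemma Recurrent.reach (hG : StronglyConnected src tgt) {c d : V → ℕ} (h : Recurrent src tgt c)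
    (hr : Reach src tgt c d) : Recurrent src tgt d :=
  (recurrent_iff hG d).2 (((recurrent_iff hG c).1 h).reach hG hr).1

lemma CReach.mono {c d q : V → ℕ} (h : CReach src tgt c q d) (x : V → ℕ) :
    CReach src tgt (c + x) q (d + x) := by
  induction h with
  | refl => exact CReach.refl
  | @step q d v _ hv ih =>
    have hv' : outdeg src v ≤ (d + x) v := by simp only [Pi.add_apply]; omega
    have : fire src tgt d v + x = fire src tgt (d + x) v := by
      funext w
      have h1 := fire_add (tgt := tgt) d v hv w
      have h2 := fire_add (tgt := tgt) (d + x) v hv' w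
      simp only [Pi.add_apply] at h2 ⊢
      omega
    rw [this]
    exact CReach.step v ih hv'

lemma Recurrent.add (hG : StronglyConnected src tgt) {c : V → ℕ} (h : Recurrent src tgt c)
    (x : V → ℕ) : Recurrent src tgt (c + x) := by
  rw [recurrent_iff hG] at h ⊢
  obtain ⟨q, hq, hl⟩ := h
  exact ⟨q, hq, hl.mono x⟩

/-- Pigeonhole principle for relations on finite closed sets. -/
lemma exists_loop {α : Type} (R : α → α → Prop) (a : α)
    (hfin : {b | Relation.ReflTransGen R a b}.Finite)
    (hs : ∀ b, Relation.ReflTransGen R a b → ∃ b', R b b') :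
    ∃ b, Relation.ReflTransGen R a b ∧ Relation.TransGen R b b := by
  by_contra hcon
  push Not at hcon
  let S := {b | Relation.ReflTransGen R a b}
  haveI : Finite S := hfin
  let r : S → S → Prop := fun x y => Relation.TransGen R y.1 x.1
  haveI : IsTrans S r := ⟨fun x y z hxy hyz => Relation.TransGen.trans hyz hxy⟩
  haveI : Std.Irrefl r := ⟨fun x hx => hcon x.1 x.2 hx⟩
  have wf : WellFounded r := Finite.wellFounded_of_trans_of_irrefl r
  obtain ⟨m, _, hm⟩ := wf.has_min (Set.univ : Set S) ⟨⟨a, Relation.ReflTransGen.refl⟩, trivial⟩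
  obtain ⟨b', hb'⟩ := hs m.1 m.2
  exact hm ⟨b', Relation.ReflTransGen.tail m.2 hb'⟩ trivial (Relation.TransGen.single hb')

lemma apply_le_lvl (c : V → ℕ) (v : V) : c v ≤ lvl c :=
  Finset.single_le_sum (f := c) (fun _ _ => Nat.zero_le _) (Finset.mem_univ v)

lemma exists_recurrent [Nonempty V] (hG : StronglyConnected src tgt) :
    ∃ c, Recurrent src tgt c := by
  obtain ⟨b, _, hb⟩ := exists_loop (FireStep src tgt) (outdeg src)
    ((Set.finite_Icc (0 : V → ℕ) (fun _ => lvl (outdeg src))).subset (by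
      intro b hb
      refine ⟨fun _ => Nat.zero_le _, fun v => ?_⟩
      have : lvl b = lvl (outdeg src) := Reach.lvl_eq hb
      show b v ≤ lvl (outdeg src)
      rw [← this]
      exact apply_le_lvl b v)) (by
    intro b hb
    by_contra hcon
    have hl : lvl b = lvl (outdeg src) := Reach.lvl_eq hb
    have hlt : ∀ v, b v < outdeg src v := by
      intro v
      by_contra hv
      exact hcon ⟨_, v, by omega, rfl⟩
    have : ∑ v, b v < ∑ v, outdeg src v :=
      Finset.sum_lt_sum_of_nonempty Finset.univ_nonempty (fun v _ => hlt v)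
    unfold lvl at hl
    omega)
  refine ⟨b, (recurrent_iff hG b).2 ?_⟩
  obtain ⟨e, h1, v, hv, he⟩ := Relation.TransGen.tail'_iff.1 hb
  obtain ⟨p, hp⟩ := Reach.creach h1
  refine ⟨_, add_single_ne p v, ?_⟩
  have := CReach.step v hp hv
  rwa [← he] at this

/-! ### The sink model -/

lemma restrict_fire_s (c : V → ℕ) :
    restrictS s (fire src tgt c s) = restrictS s c + betaS src tgt s := by
  funext w
  simp [restrictS, fire, betaS, w.2]

lemma restrict_fire (c : V → ℕ) (v : {v : V // v ≠ s}) :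
    restrictS s (fire src tgt c v.1) = sfire src tgt s (restrictS s c) v := by
  funext w
  simp [restrictS, fire, sfire, Subtype.ext_iff]

lemma sfire_mono (a x : {v : V // v ≠ s} → ℕ) (v : {v : V // v ≠ s})
    (hv : outdeg src v.1 ≤ a v) :
    sfire src tgt s (a + x) v = sfire src tgt s a v + x := by
  funext w
  simp only [sfire, Pi.add_apply]
  split_ifs with h
  · subst h; omega
  · omega

lemma SReach.mono {a b : {v : V // v ≠ s} → ℕ} (h : SReach src tgt s a b)
    (x : {v : V // v ≠ s} → ℕ) : SReach src tgt s (a + x) (b + x) := by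
  induction h with
  | refl => exact Relation.ReflTransGen.refl
  | tail _ hs ih =>
    obtain ⟨v, hv, rfl⟩ := hs
    refine Relation.ReflTransGen.tail ih ⟨v, ?_, (sfire_mono _ x v hv).symm⟩
    simp only [Pi.add_apply]; omega

lemma SReach.add {a b a' b' : {v : V // v ≠ s} → ℕ} (h : SReach src tgt s a b)
    (h' : SReach src tgt s a' b') : SReach src tgt s (a + a') (b + b') := by
  refine (h.mono a').trans ?_
  rw [add_comm b a', add_comm b b']
  exact h'.mono b

lemma lift_sreach {c : V → ℕ} {a b : {v : V // v ≠ s} → ℕ} (ha : restrictS s c = a)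
    (h : SReach src tgt s a b) :
    ∃ p d, CReach src tgt c p d ∧ p s = 0 ∧ restrictS s d = b := by
  induction h with
  | refl => exact ⟨0, c, CReach.refl, rfl, ha⟩
  | tail _ hs ih =>
    obtain ⟨p, d, h1, h2, h3⟩ := ih
    obtain ⟨v, hv, rfl⟩ := hs
    refine ⟨_, _, CReach.step v.1 h1 ?_, ?_, ?_⟩
    · rw [← h3] at hv; exact hv
    · simp [h2, Pi.single_apply, v.2.symm]
    · rw [restrict_fire, h3]

lemma lift_stransgen {c : V → ℕ} {a b : {v : V // v ≠ s} → ℕ} (ha : restrictS s c = a)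
    (h : Relation.TransGen (SFireStep src tgt s) a b) :
    ∃ p d, p ≠ 0 ∧ CReach src tgt c p d ∧ p s = 0 ∧ restrictS s d = b := by
  obtain ⟨e, h1, v, hv, rfl⟩ := Relation.TransGen.tail'_iff.1 h
  obtain ⟨p, d, h1, h2, h3⟩ := lift_sreach ha h1
  refine ⟨_, _, add_single_ne p v.1, CReach.step v.1 h1 ?_, ?_, ?_⟩
  · rw [← h3] at hv; exact hv
  · simp [h2, Pi.single_apply, v.2.symm]
  · rw [restrict_fire, h3]

lemma lvl_eq_restrict (s : V) (c : V → ℕ) : lvl c = c s + ∑ v, restrictS s c v := by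
  unfold lvl restrictS
  rw [← Finset.add_sum_erase Finset.univ c (Finset.mem_univ s)]
  congr 1
  exact Finset.sum_subtype _ (by simp) c

lemma ext_restrict {c d : V → ℕ} (h : restrictS s c = restrictS s d) (hl : lvl c = lvl d) :
    c = d := by
  rw [lvl_eq_restrict s c, lvl_eq_restrict s d, h] at hl
  funext v
  by_cases hv : v = s
  · subst hv; omega
  · exact congrFun h ⟨v, hv⟩

lemma restrict_extend (a : {v : V // v ≠ s} → ℕ) (k : ℕ) :
    restrictS s (extendS s a + k • deltaS s) = a := by
  funext v
  simp [restrictS, extendS, deltaS, v.2]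

lemma extend_s (a : {v : V // v ≠ s} → ℕ) (k : ℕ) :
    (extendS s a + k • deltaS s) s = k := by
  simp [extendS, deltaS]

lemma lvl_extend (a : {v : V // v ≠ s} → ℕ) (k : ℕ) :
    lvl (extendS s a + k • deltaS s) = k + ∑ v, a v := by
  rw [lvl_eq_restrict s, restrict_extend, extend_s]

lemma eq_extend (c : V → ℕ) : extendS s (restrictS s c) + c s • deltaS s = c := by
  apply ext_restrict (s := s)
  · rw [restrict_extend]
  · rw [lvl_extend, ← lvl_eq_restrict]

lemma exists_stab (hG : StronglyConnected src tgt) (a : {v : V // v ≠ s} → ℕ) :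
    ∃ d, SReach src tgt s a d ∧ SStable src s d := by
  by_contra hcon
  push Not at hcon
  have hc := restrict_extend (s := s) a 0
  obtain ⟨b, _, hb⟩ := exists_loop (SFireStep src tgt s) a
    ((Set.finite_Icc (0 : {v : V // v ≠ s} → ℕ)
      (fun _ => lvl (extendS s a + 0 • deltaS s))).subset (by
      intro b hb
      refine ⟨fun _ => Nat.zero_le _, fun v => ?_⟩
      obtain ⟨p, d, h1, _, h3⟩ := lift_sreach hc hb
      show b v ≤ lvl (extendS s a + 0 • deltaS s)
      rw [← h1.lvl_eq, ← h3]
      exact apply_le_lvl d v.1)) (by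
    intro b hb
    have := hcon b hb
    unfold SStable at this
    push Not at this
    obtain ⟨v, hv⟩ := this
    exact ⟨_, v, hv, rfl⟩)
  have hc' := restrict_extend (s := s) b 0
  obtain ⟨p, d, hp, h1, h2, h3⟩ := lift_stransgen hc' hb
  have hd : d = extendS s b + 0 • deltaS s :=
    ext_restrict (s := s) (h3.trans hc'.symm) h1.lvl_eq
  rw [hd] at h1
  have := h1.pos hG hp s
  omega

lemma sdiamond (a b c : {v : V // v ≠ s} → ℕ) (h1 : SFireStep src tgt s a b)
    (h2 : SFireStep src tgt s a c) :
    ∃ d, Relation.ReflGen (SFireStep src tgt s) b d ∧ SReach src tgt s c d := by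
  obtain ⟨v, hv, rfl⟩ := h1
  obtain ⟨w, hw, rfl⟩ := h2
  by_cases hvw : v = w
  · subst hvw
    exact ⟨_, Relation.ReflGen.refl, Relation.ReflTransGen.refl⟩
  · have hne : v.1 ≠ w.1 := fun h => hvw (Subtype.ext h)
    have hr := restrict_extend (s := s) a 0
    set C := extendS s a + 0 • deltaS s
    have hv' : outdeg src v.1 ≤ C v.1 := by rw [← hr] at hv; exact hv
    have hw' : outdeg src w.1 ≤ C w.1 := by rw [← hr] at hw; exact hw
    have f1 := fire_comm (tgt := tgt) C v.1 w.1 hne hv' hw'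
    have f2 := fire_comm (tgt := tgt) C w.1 v.1 hne.symm hw' hv'
    rw [← hr, ← restrict_fire, ← restrict_fire]
    refine ⟨restrictS s (fire src tgt (fire src tgt C v.1) w.1),
      Relation.ReflGen.single ⟨w, f1.1, restrict_fire _ _⟩,
      Relation.ReflTransGen.single ⟨v, f2.1, ?_⟩⟩
    rw [f1.2, restrict_fire]

lemma stable_reach {a b : {v : V // v ≠ s} → ℕ} (ha : SStable src s a)
    (h : SReach src tgt s a b) : b = a := by
  induction h with
  | refl => rfl
  | tail _ hs ih =>
    obtain ⟨v, hv, _⟩ := hs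
    rw [ih] at hv
    exact absurd (ha v) (by omega)

lemma stab_spec (hG : StronglyConnected src tgt) (a : {v : V // v ≠ s} → ℕ) :
    SReach src tgt s a (stab src tgt s a) ∧ SStable src s (stab src tgt s a) :=
  Classical.epsilon_spec (exists_stab hG a)

lemma stab_unique (hG : StronglyConnected src tgt) {a b : {v : V // v ≠ s} → ℕ}
    (h : SReach src tgt s a b) (hb : SStable src s b) : stab src tgt s a = b := by
  obtain ⟨h1, h2⟩ := stab_spec (s := s) hG a
  obtain ⟨d, hd1, hd2⟩ := Relation.church_rosser sdiamond h1 h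
  rw [← stable_reach h2 hd1, ← stable_reach hb hd2]

lemma stab_eq (hG : StronglyConnected src tgt) {a b : {v : V // v ≠ s} → ℕ}
    (h : SReach src tgt s a b) : stab src tgt s a = stab src tgt s b :=
  stab_unique hG (h.trans (stab_spec hG b).1) (stab_spec hG b).2

lemma stab_stab_add (hG : StronglyConnected src tgt) (a b : {v : V // v ≠ s} → ℕ) :
    stab src tgt s (stab src tgt s a + b) = stab src tgt s (a + b) :=
  (stab_eq hG ((stab_spec hG a).1.mono b)).symm

lemma SRecurrent.stab_self (hG : StronglyConnected src tgt) {a : {v : V // v ≠ s} → ℕ}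
    (h : SRecurrent src tgt s a) : stab src tgt s a = a := by
  obtain ⟨c, hc⟩ := h 0
  refine stab_unique hG Relation.ReflTransGen.refl ?_
  rw [← hc]
  exact (stab_spec hG _).2

lemma CReach.sreach {c d p : V → ℕ} (h : CReach src tgt c p d) :
    SReach src tgt s (restrictS s c + p s • betaS src tgt s) (restrictS s d) := by
  induction h with
  | refl =>
    rw [Pi.zero_apply, zero_smul, add_zero]
    exact Relation.ReflTransGen.refl
  | @step q d v _ hv ih =>
    by_cases hvs : v = s
    · subst hvs
      rw [restrict_fire_s]
      have : (q + Pi.single v 1 : V → ℕ) v = q v + 1 := by simp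
      rw [this, add_smul, one_smul, ← add_assoc]
      exact ih.mono _
    · have : (q + Pi.single v 1 : V → ℕ) s = q s := by simp [Pi.single_apply, Ne.symm hvs]
      rw [this]
      exact Relation.ReflTransGen.tail ih ⟨⟨v, hvs⟩, hv, restrict_fire d ⟨v, hvs⟩⟩

lemma Reach.sequiv (hG : StronglyConnected src tgt) {c d : V → ℕ} (h : Reach src tgt c d) :
    SEquiv src tgt s (stab src tgt s (restrictS s c)) (stab src tgt s (restrictS s d)) := by
  obtain ⟨p, hp⟩ := Reach.creach h
  exact ⟨p s, by rw [stab_stab_add hG]; exact stab_eq hG hp.sreach⟩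

lemma CReach.pre {c d q : V → ℕ} (h : CReach src tgt c q d) (s : V) :
    ∀ k ≤ q s, ∃ p e, CReach src tgt c p e ∧ p s = k := by
  induction h with
  | refl => intro k hk; exact ⟨0, c, CReach.refl, by simp at hk; simp [hk]⟩
  | @step q d v hd hv ih =>
    intro k hk
    by_cases hk' : k ≤ q s
    · exact ih k hk'
    · refine ⟨_, _, CReach.step v hd hv, ?_⟩
      have : (Pi.single v 1 : V → ℕ) s ≤ 1 := by
        rw [Pi.single_apply]; split_ifs <;> omega
      simp only [Pi.add_apply] at hk ⊢
      omega

lemma Recurrent.loop (hG : StronglyConnected src tgt) {c : V → ℕ} (h : Recurrent src tgt c)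
    (s : V) (k : ℕ) : ∃ q, CReach src tgt c q c ∧ k ≤ q s := by
  obtain ⟨q, hq, hl⟩ := (recurrent_iff hG c).1 h
  have hpos := hl.pos hG hq s
  induction k with
  | zero => exact ⟨0, CReach.refl, Nat.zero_le _⟩
  | succ k ih =>
    obtain ⟨p, hp, hk⟩ := ih
    exact ⟨p + q, hp.trans hl, by simp only [Pi.add_apply]; omega⟩

lemma Recurrent.sequiv (hG : StronglyConnected src tgt) {c : V → ℕ} (h : Recurrent src tgt c)
    {b : {v : V // v ≠ s} → ℕ} (hb : SEquiv src tgt s (restrictS s c) b) :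
    ∃ d, Reach src tgt c d ∧ restrictS s d = b := by
  obtain ⟨k, rfl⟩ := hb
  obtain ⟨q, hq, hk⟩ := Recurrent.loop hG h s k
  obtain ⟨p, e, he, rfl⟩ := hq.pre s k hk
  obtain ⟨p', d, hd, _, h3⟩ := lift_sreach rfl (stab_spec (s := s) hG (restrictS s e)).1
  exact ⟨d, he.reach.trans hd.reach, by rw [h3, stab_eq hG he.sreach]⟩

lemma beta_large (hG : StronglyConnected src tgt) (y : {v : V // v ≠ s} → ℕ) :
    ∃ (K : ℕ) (x : {v : V // v ≠ s} → ℕ), SReach src tgt s (K • betaS src tgt s) x ∧ y ≤ x := by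
  have hadd : ∀ y y' : {v : V // v ≠ s} → ℕ,
      (∃ (K : ℕ) (x : {v : V // v ≠ s} → ℕ), SReach src tgt s (K • betaS src tgt s) x ∧ y ≤ x) →
      (∃ (K : ℕ) (x : {v : V // v ≠ s} → ℕ), SReach src tgt s (K • betaS src tgt s) x ∧ y' ≤ x) →
      (∃ (K : ℕ) (x : {v : V // v ≠ s} → ℕ), SReach src tgt s (K • betaS src tgt s) x ∧ y + y' ≤ x) := by
    rintro y y' ⟨K, x, h, hy⟩ ⟨K', x', h', hy'⟩
    refine ⟨K + K', x + x', ?_, add_le_add hy hy'⟩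
    rw [add_smul]
    exact h.add h'
  have hzero : ∃ (K : ℕ) (x : {v : V // v ≠ s} → ℕ), SReach src tgt s (K • betaS src tgt s) x ∧ 0 ≤ x :=
    ⟨0, _, Relation.ReflTransGen.refl, fun _ => Nat.zero_le _⟩
  have hsmul : ∀ (y : {v : V // v ≠ s} → ℕ) (n : ℕ),
      (∃ (K : ℕ) (x : {v : V // v ≠ s} → ℕ), SReach src tgt s (K • betaS src tgt s) x ∧ y ≤ x) →
      (∃ (K : ℕ) (x : {v : V // v ≠ s} → ℕ), SReach src tgt s (K • betaS src tgt s) x ∧ n • y ≤ x) := by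
    intro y n h
    induction n with
    | zero => simpa using hzero
    | succ n ih => rw [add_smul, one_smul]; exact hadd _ _ ih h
  have hP : ∀ w : V, ∀ hw : w ≠ s, ∃ (K : ℕ) (x : {v : V // v ≠ s} → ℕ), SReach src tgt s (K • betaS src tgt s) x ∧
      (Pi.single ⟨w, hw⟩ 1 : {v : V // v ≠ s} → ℕ) ≤ x := by
    intro w
    have hp := hG s w
    induction hp with
    | refl => intro hw; exact absurd rfl hw
    | @tail a b _ he ih =>
      intro hb
      obtain ⟨e, rfl, rfl⟩ := he
      have h2 : 0 < numEdges src tgt (src e) (tgt e) := Finset.card_pos.2 ⟨e, by simp⟩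
      by_cases ha : src e = s
      · refine ⟨1, _, Relation.ReflTransGen.refl, ?_⟩
        rw [one_smul]
        intro v
        rw [Pi.single_apply]
        split_ifs with hv
        · subst hv; rw [ha] at h2; exact h2
        · exact Nat.zero_le _
      · by_cases hab : src e = tgt e
        · have h := ih ha
          simpa only [hab] using h
        · obtain ⟨K, x, hx, hle⟩ := hsmul _ (outdeg src (src e)) (ih ha)
          have hl : outdeg src (src e) ≤ x ⟨src e, ha⟩ := by
            simpa using hle ⟨src e, ha⟩
          refine ⟨K, _, Relation.ReflTransGen.tail hx ⟨⟨src e, ha⟩, hl, rfl⟩, ?_⟩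
          intro v
          rw [Pi.single_apply]
          split_ifs with hv
          · subst hv
            have : (⟨tgt e, hb⟩ : {v : V // v ≠ s}) ≠ ⟨src e, ha⟩ := by
              intro h; exact hab (congrArg Subtype.val h).symm
            simp only [sfire, this, if_false]
            omega
          · exact Nat.zero_le _
  have hfin : ∀ S : Finset {v : V // v ≠ s},
      ∃ (K : ℕ) (x : {v : V // v ≠ s} → ℕ), SReach src tgt s (K • betaS src tgt s) x ∧
        (∑ v ∈ S, y v • (Pi.single v 1 : {v : V // v ≠ s} → ℕ)) ≤ x := by
    intro S
    induction S using Finset.induction_on with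
    | empty => simpa using hzero
    | insert v S hv ih =>
      rw [Finset.sum_insert hv]
      exact hadd _ _ (hsmul _ _ (hP v.1 v.2)) ih
  obtain ⟨K, x, hx, hle⟩ := hfin Finset.univ
  refine ⟨K, x, hx, ?_⟩
  convert hle using 1
  funext w
  simp [Finset.sum_apply, Pi.single_apply]

lemma Recurrent.srecurrent (hG : StronglyConnected src tgt) {c : V → ℕ}
    (h : Recurrent src tgt c) : SRecurrent src tgt s (stab src tgt s (restrictS s c)) := by
  intro y
  obtain ⟨K, x, hx, hle⟩ := beta_large (s := s) hG y
  obtain ⟨q, hq, hk⟩ := Recurrent.loop hG h s K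
  obtain ⟨m, hm⟩ := Nat.exists_eq_add_of_le hk
  have h1 := hq.sreach (s := s)
  rw [hm, add_smul] at h1
  have h2 : SReach src tgt s
      (restrictS s c + (K • betaS src tgt s + m • betaS src tgt s))
      (x + (restrictS s c + m • betaS src tgt s)) := by
    have := hx.mono (restrictS s c + m • betaS src tgt s)
    convert this using 1
    abel
  refine ⟨(x - y) + (restrictS s c + m • betaS src tgt s), ?_⟩
  rw [← add_assoc, add_tsub_cancel_of_le hle, ← stab_eq hG h2, stab_eq hG h1]

lemma SRecurrent.exists_rec [Nonempty V] (hG : StronglyConnected src tgt)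
    {a : {v : V // v ≠ s} → ℕ} (h : SRecurrent src tgt s a) :
    ∃ k : ℕ, Recurrent src tgt (extendS s a + k • deltaS s) := by
  obtain ⟨R, hR⟩ := exists_recurrent hG
  obtain ⟨c₂, rfl⟩ := h (restrictS s R)
  have hR' := hR.add hG (extendS s c₂ + 0 • deltaS s)
  have hres : restrictS s (R + (extendS s c₂ + 0 • deltaS s)) = restrictS s R + c₂ := by
    have : restrictS s (R + (extendS s c₂ + 0 • deltaS s))
      = restrictS s R + restrictS s (extendS s c₂ + 0 • deltaS s) := rfl
    rw [this, restrict_extend]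
  obtain ⟨p, d, hd, _, h3⟩ := lift_sreach hres (stab_spec hG _).1
  refine ⟨d s, ?_⟩
  rw [← h3, eq_extend]
  exact hR'.reach hG hd.reach

lemma SRecurrent.exists_lvl [Nonempty V] (hG : StronglyConnected src tgt)
    {a : {v : V // v ≠ s} → ℕ} (h : SRecurrent src tgt s a) (n : ℕ)
    (hn : slvl src tgt s a ≤ n) :
    ∃ c, Recurrent src tgt c ∧ restrictS s c = a ∧ lvl c = n := by
  have hmem : Recurrent src tgt (extendS s a + sIndex src tgt s a • deltaS s) :=
    Nat.sInf_mem (s := {k : ℕ | Recurrent src tgt (extendS s a + k • deltaS s)})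
      (h.exists_rec hG)
  obtain ⟨m, rfl⟩ := Nat.exists_eq_add_of_le hn
  have := hmem.add hG (m • deltaS s)
  rw [add_assoc, ← add_smul] at this
  refine ⟨_, this, restrict_extend _ _, ?_⟩
  rw [lvl_extend]
  unfold slvl
  omega

lemma Recurrent.slvl_le {c : V → ℕ} (h : Recurrent src tgt c) :
    slvl src tgt s (restrictS s c) ≤ lvl c := by
  rw [lvl_eq_restrict s c]
  unfold slvl
  refine Nat.add_le_add_right (Nat.sInf_le ?_) _
  show Recurrent src tgt _
  rw [eq_extend]
  exact h

lemma sequiv_symm [Nonempty V] (hG : StronglyConnected src tgt)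
    {a b : {v : V // v ≠ s} → ℕ} (ha : SRecurrent src tgt s a) (hb : SRecurrent src tgt s b)
    (h : SEquiv src tgt s a b) : SEquiv src tgt s b a := by
  obtain ⟨c, hc, rfl, _⟩ := ha.exists_lvl hG _ le_rfl
  obtain ⟨d, hd, rfl⟩ := Recurrent.sequiv hG hc h
  have := Reach.sequiv (s := s) hG (hc.2 d hd)
  rwa [ha.stab_self hG, hb.stab_self hG] at this

lemma recS_sequiv [Nonempty V] (hG : StronglyConnected src tgt) {a b : RecS src tgt s}
    (h : (recSSetoid src tgt s).r a b) : SEquiv src tgt s a.1 b.1 := by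
  have h' : Relation.EqvGen (fun a b : RecS src tgt s => SEquiv src tgt s a.1 b.1) a b := h
  clear h
  induction h' with
  | rel _ _ h => exact h
  | refl a => exact ⟨0, by simpa using a.2.stab_self hG⟩
  | symm a b h ih => exact sequiv_symm hG a.2 b.2 ih
  | trans a b c h1 h2 ih1 ih2 =>
    obtain ⟨k, hk⟩ := ih1
    obtain ⟨l, hl⟩ := ih2
    refine ⟨k + l, ?_⟩
    rw [← hl, ← hk, stab_stab_add hG, add_smul, add_assoc]

lemma slvl_le_of_sequiv [Nonempty V] (hG : StronglyConnected src tgt)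
    {a b : {v : V // v ≠ s} → ℕ} (ha : SRecurrent src tgt s a)
    (h : SEquiv src tgt s a b) : slvl src tgt s b ≤ slvl src tgt s a := by
  obtain ⟨c, hc, rfl, hl⟩ := ha.exists_lvl hG _ le_rfl
  obtain ⟨d, hd, rfl⟩ := Recurrent.sequiv hG hc h
  have := Recurrent.slvl_le (s := s) (Recurrent.reach hG hc hd)
  rw [Reach.lvl_eq hd, hl] at this
  exact this

lemma slvlClass_mk [Nonempty V] (hG : StronglyConnected src tgt) (a : RecS src tgt s) :
    slvlClass src tgt s (Quotient.mk (recSSetoid src tgt s) a) = slvl src tgt s a.1 := by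
  apply IsGreatest.csSup_eq
  refine ⟨⟨a, rfl, rfl⟩, ?_⟩
  rintro _ ⟨b, hb, rfl⟩
  have hb' : (recSSetoid src tgt s).r b a := Quotient.exact hb
  exact slvl_le_of_sequiv hG a.2 (sequiv_symm hG b.2 a.2 (recS_sequiv hG hb'))

lemma recL_reach {c d : RecL src tgt}
    (h : (recLSetoid src tgt).r c d) : Reach src tgt c.1 d.1 := by
  have h' : Relation.EqvGen (fun a b : RecL src tgt => Reach src tgt a.1 b.1) c d := h
  clear h
  induction h' with
  | rel _ _ h => exact h
  | refl a => exact Relation.ReflTransGen.refl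
  | symm a b h ih => exact a.2.2 _ ih
  | trans a b c h1 h2 ih1 ih2 => exact ih1.trans ih2

/-- A configuration reaches one whose restriction is the stabilized restriction. -/
lemma reach_stab (hG : StronglyConnected src tgt) (s : V) (c : V → ℕ) :
    ∃ d, Reach src tgt c d ∧ restrictS s d = stab src tgt s (restrictS s c) := by
  obtain ⟨p, d, hd, _, h3⟩ := lift_sreach rfl (stab_spec (s := s) hG (restrictS s c)).1
  exact ⟨d, hd.reach, h3⟩

end Aux

/-- The map `Φ̃` sending the `~`-class of a recurrent configuration `c`
to the `~_s`-class of the stabilization of its restriction is well defined, and for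
every `n` it restricts to a bijection from `Rec_n(G,~)` onto
`{[d̂] ∈ Rec(G,s)/~_s : slvl([d̂]) ≤ n}`. -/
theorem phiTilde_bijection [Nonempty V] (src tgt : E → V)
    (hG : StronglyConnected src tgt) (s : V) :
    ∃ hrec : ∀ c : V → ℕ, Recurrent src tgt c →
        SRecurrent src tgt s (stab src tgt s (restrictS s c)),
      (∀ c d : RecL src tgt, (recLSetoid src tgt).r c d →
        (recSSetoid src tgt s).r
          ⟨stab src tgt s (restrictS s c.1), hrec c.1 c.2⟩
          ⟨stab src tgt s (restrictS s d.1), hrec d.1 d.2⟩) ∧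
      ∀ n : ℕ,
        (∀ c : RecL src tgt, lvl c.1 = n →
          slvlClass src tgt s (Quotient.mk (recSSetoid src tgt s)
            ⟨stab src tgt s (restrictS s c.1), hrec c.1 c.2⟩) ≤ n) ∧
        (∀ c d : RecL src tgt, lvl c.1 = n → lvl d.1 = n →
          Quotient.mk (recSSetoid src tgt s)
              ⟨stab src tgt s (restrictS s c.1), hrec c.1 c.2⟩ =
            Quotient.mk (recSSetoid src tgt s)
              ⟨stab src tgt s (restrictS s d.1), hrec d.1 d.2⟩ →
          Quotient.mk (recLSetoid src tgt) c = Quotient.mk (recLSetoid src tgt) d) ∧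
        (∀ q : RecSQuot src tgt s, slvlClass src tgt s q ≤ n →
          ∃ c : RecL src tgt, lvl c.1 = n ∧
            Quotient.mk (recSSetoid src tgt s)
              ⟨stab src tgt s (restrictS s c.1), hrec c.1 c.2⟩ = q) := by
  refine ⟨fun c hc => Recurrent.srecurrent hG hc, ?_, ?_⟩
  · intro c d h
    exact Relation.EqvGen.rel _ _ (Reach.sequiv hG (recL_reach h))
  · intro n
    refine ⟨?_, ?_, ?_⟩
    · rintro c rfl
      rw [slvlClass_mk hG]
      obtain ⟨d, hd, hr⟩ := reach_stab hG s c.1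
      have := Recurrent.slvl_le (s := s) (Recurrent.reach hG c.2 hd)
      rw [hr, Reach.lvl_eq hd] at this
      exact this
    · intro c d hc hd h
      have h' := recS_sequiv hG (Quotient.exact h)
      obtain ⟨c1, hc1, hr1⟩ := reach_stab hG s c.1
      obtain ⟨d1, hd1, hr2⟩ := reach_stab hG s d.1
      change SEquiv src tgt s (stab src tgt s (restrictS s c.1))
        (stab src tgt s (restrictS s d.1)) at h'
      rw [← hr1] at h'
      obtain ⟨e, he, hr3⟩ := Recurrent.sequiv hG (Recurrent.reach hG c.2 hc1) h'
      have hed : e = d1 := by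
        apply ext_restrict (s := s) (hr3.trans hr2.symm)
        rw [Reach.lvl_eq he, Reach.lvl_eq hc1, Reach.lvl_eq hd1, hc, hd]
      subst hed
      exact Quotient.sound (s := recLSetoid src tgt)
        (Relation.EqvGen.rel _ _ ((hc1.trans he).trans (d.2.2 _ hd1)))
    · intro q
      induction q using Quotient.inductionOn with
      | h a =>
        intro hq
        rw [slvlClass_mk hG] at hq
        obtain ⟨c, hc, hr, hl⟩ := a.2.exists_lvl hG n hq
        refine ⟨⟨c, hc⟩, hl, ?_⟩
        congr 1
        apply Subtype.ext
        show stab src tgt s (restrictS s c) = a.1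
        rw [hr, a.2.stab_self hG]


end SandpileBM
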